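/- arXiv:math/0512408 — 2 statements merged into one kernel-verified Lean document; each statement's English description precedes it below -/
import Mathlib

section
/- Let (W, S) be a Coxeter system of finite rank. Suppose I, J ⊆ S and w ∈ W satisfy W_I ⊄ w W_J w⁻¹ and w W_J w⁻¹ ⊄ W_I. Then the intersection W_I ∩ w W_J w⁻¹ equals x W_K x⁻¹ for some x ∈ W and K ⊆ S with |K| < min{|I|, |J|}. -/
/-!
Let `W` act on `W × ℤ/2`, the simple reflection `s_i` by `(t, e) ↦ (s_i t s_i, e + [t = s_i])`. The
second coordinate counts, modulo 2, the occurrences of `t` in the inversion sequence of a word, so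
this parity depends only on the element `w` that the word represents, and `t` is an inversion of
`w` exactly when it is odd. Hence an inversion `t` of `u v` is either an inversion of `v`, or such
that `v t v⁻¹` is an inversion of `u`; this is the form of the exchange condition from which
everything else follows.

Write `w = a d b` with `a ∈ W_I`, `b ∈ W_J` and `d` of minimal length in its double coset. Then
`W_I ∩ w W_J w⁻¹` is the conjugate by `a` of `W_I ∩ d W_J d⁻¹`, and the latter is generated by
`s_I ∩ d s_J d⁻¹`. Indeed, let `u s_i > u` be elements of `W_I` with `u s_i = d v d⁻¹`, `v ∈ W_J`.
Lengths add in `W_I d`, so `s_i` is an inversion of `v d⁻¹ = d⁻¹ (u s_i)` but not of `d⁻¹`, and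
`d⁻¹ s_i d` is an inversion of `v`. It therefore lies in `W_J`, and since lengths add in `d W_J` it
is a simple reflection. If `s_I ∩ d s_J d⁻¹` were all of `s_I` or all of `d s_J d⁻¹`, one of `W_I`
and `w W_J w⁻¹` would contain the other.
-/

namespace CoxeterParabolic

open CoxeterSystem
open scoped Pointwise

variable {B W : Type*} [Group W] {M : CoxeterMatrix B} (cs : CoxeterSystem M W)

section InversionParity

open Classical in
/-- The transformation `(t, e) ↦ (s_i t s_i, e + [t = s_i])` of `W × ℤ/2`, through which the simple
reflection `s_i` keeps track of inversions. To avoid a subtype it is defined for every `t : W`, not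
only for reflections. -/
noncomputable def inversionStep (i : B) : Function.End (W × ZMod 2) := fun p ↦
  (cs.simple i * p.1 * cs.simple i, p.2 + if p.1 = cs.simple i then 1 else 0)

open Classical in
theorem prod_map_inversionStep_apply (ω : List B) (t : W) (e : ZMod 2) :
    (ω.map (inversionStep cs)).prod • (t, e) =
      (cs.wordProd ω * t * (cs.wordProd ω)⁻¹, e + (cs.rightInvSeq ω).count t) := by
  induction ω with
  | nil => simp
  | cons i ω ih =>
    have conj_eq_iff : cs.wordProd ω * (t * (cs.wordProd ω)⁻¹) = cs.simple i ↔
        (cs.wordProd ω)⁻¹ * (cs.simple i * cs.wordProd ω) = t := by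
      rw [← mul_assoc, mul_inv_eq_iff_eq_mul, inv_mul_eq_iff_eq_mul, eq_comm]
    rw [List.map_cons, List.prod_cons, mul_smul, ih, Function.End.smul_def]
    simp only [inversionStep, rightInvSeq, List.count_cons, beq_iff_eq, conj_eq_iff, wordProd_cons,
      mul_inv_rev, inv_simple, mul_assoc, add_assoc, Nat.cast_add, Nat.cast_ite, Nat.cast_one,
      Nat.cast_zero]

theorem inversionStep_mul_pow (i j : B) (m : ℕ) :
    (inversionStep cs i * inversionStep cs j) ^ m =
      ((alternatingWord j i (2 * m)).reverse.map (inversionStep cs)).prod := by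
  induction m with
  | zero => simp [alternatingWord]
  | succ m ih =>
    rw [Nat.mul_succ, alternatingWord_succ, alternatingWord_succ, pow_succ', ih]
    simp [mul_assoc]

theorem drop_leftInvSeq_alternatingWord (i j : B) :
    (cs.leftInvSeq (alternatingWord i j (2 * M i j))).drop (M i j) =
      (cs.leftInvSeq (alternatingWord i j (2 * M i j))).take (M i j) := by
  refine List.ext_getElem (by simp; omega) fun k _ hk ↦ ?_
  have hk : k < M i j := by simp at hk; omega
  rw [List.getElem_drop, List.getElem_take,
    getElem_leftInvSeq_alternatingWord cs i j _ _ (by omega),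
    getElem_leftInvSeq_alternatingWord cs i j _ _ (by omega),
    prod_alternatingWord_eq_mul_pow, prod_alternatingWord_eq_mul_pow]
  simp [Nat.mul_add_div, pow_add]

open Classical in
theorem count_leftInvSeq_alternatingWord (i j : B) (t : W) :
    ((cs.leftInvSeq (alternatingWord i j (2 * M i j))).count t : ZMod 2) = 0 := by
  rw [← List.take_append_drop (M i j) (cs.leftInvSeq _), drop_leftInvSeq_alternatingWord,
    List.count_append, Nat.cast_add, CharTwo.add_self_eq_zero]

theorem isLiftable_inversionStep : M.IsLiftable (inversionStep cs) := by
  classical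
  intro i j
  refine eq_of_smul_eq_smul (α := W × ZMod 2) fun ⟨t, e⟩ ↦ ?_
  rw [inversionStep_mul_pow, prod_map_inversionStep_apply, rightInvSeq_reverse, List.count_reverse,
    M.symmetric i j, count_leftInvSeq_alternatingWord, wordProd_reverse,
    prod_alternatingWord_eq_mul_pow]
  simp

/-- The action of `W` on `W × ℤ/2` that extends `inversionStep`. -/
noncomputable def inversionHom : W →* Function.End (W × ZMod 2) :=
  cs.lift ⟨inversionStep cs, isLiftable_inversionStep cs⟩

/-- The parity of the number of occurrences of `t` in the right inversion sequence of any word that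
represents `w`. -/
noncomputable def inversionParity (w t : W) : ZMod 2 := (inversionHom cs w • (t, (0 : ZMod 2))).2

open Classical in
theorem inversionHom_wordProd_apply (ω : List B) (t : W) (e : ZMod 2) :
    inversionHom cs (cs.wordProd ω) • (t, e) =
      (cs.wordProd ω * t * (cs.wordProd ω)⁻¹, e + (cs.rightInvSeq ω).count t) := by
  rw [← prod_map_inversionStep_apply, wordProd, map_list_prod, List.map_map]
  congr! 3
  exact funext (cs.lift_apply_simple (isLiftable_inversionStep cs))

open Classical in
theorem inversionParity_wordProd (ω : List B) (t : W) :
    inversionParity cs (cs.wordProd ω) t = (cs.rightInvSeq ω).count t := by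
  rw [inversionParity, inversionHom_wordProd_apply, zero_add]

theorem inversionHom_apply (w t : W) (e : ZMod 2) :
    inversionHom cs w • (t, e) = (w * t * w⁻¹, e + inversionParity cs w t) := by
  obtain ⟨ω, rfl⟩ := cs.wordProd_surjective w
  rw [inversionHom_wordProd_apply, inversionParity_wordProd]

theorem inversionParity_mul (u v t : W) :
    inversionParity cs (u * v) t =
      inversionParity cs v t + inversionParity cs u (v * t * v⁻¹) := by
  rw [inversionParity, map_mul, mul_smul, inversionHom_apply, inversionHom_apply, zero_add]

theorem inversionParity_one (t : W) : inversionParity cs 1 t = 0 := by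
  simp [inversionParity]

theorem inversionParity_simple_self (i : B) :
    inversionParity cs (cs.simple i) (cs.simple i) = 1 := by
  simpa using inversionParity_wordProd cs [i] (cs.simple i)

variable {cs}

theorem inversionParity_self {t : W} (ht : cs.IsReflection t) : inversionParity cs t t = 1 := by
  obtain ⟨u, i, rfl⟩ := ht
  have inv_cancel : inversionParity cs u⁻¹ (u * cs.simple i * u⁻¹) +
      inversionParity cs u (cs.simple i) = 0 := by
    simpa [inversionParity_one, mul_assoc] using
      (inversionParity_mul cs u u⁻¹ (u * cs.simple i * u⁻¹)).symm
  simp only [inversionParity_mul, mul_inv_rev, inv_inv, mul_assoc, inv_mul_cancel, mul_one,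
    inv_mul_cancel_left, inversionParity_simple_self, mul_inv_cancel] at inv_cancel ⊢
  linear_combination inv_cancel

theorem isRightInversion_iff_inversionParity_eq_one {w t : W} :
    cs.IsRightInversion w t ↔ inversionParity cs w t = 1 := by
  classical
  have isRightInversion_of_parity {w : W} (h : inversionParity cs w t = 1) :
      cs.IsRightInversion w t := by
    obtain ⟨ω, hω, rfl⟩ := cs.exists_isReduced w
    refine cs.isRightInversion_of_mem_rightInvSeq hω (of_not_not fun hmem ↦ ?_)
    simp [inversionParity_wordProd, List.count_eq_zero_of_not_mem hmem] at h
  refine ⟨fun ⟨ht, hlt⟩ ↦ ?_, isRightInversion_of_parity⟩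
  by_contra hne
  have parity_mul : inversionParity cs (w * t) t = 1 := by
    rw [inversionParity_mul, inversionParity_self ht, mul_inv_cancel_right,
      (by decide : ∀ a : ZMod 2, a ≠ 1 → a = 0) _ hne, add_zero]
  exact ht.not_isRightInversion_mul_left_iff.2 ⟨ht, hlt⟩ (isRightInversion_of_parity parity_mul)

theorem isRightInversion_or_of_mul {u v t : W} (h : cs.IsRightInversion (u * v) t) :
    cs.IsRightInversion v t ∨ cs.IsRightInversion u (v * t * v⁻¹) := by
  simp only [isRightInversion_iff_inversionParity_eq_one, inversionParity_mul] at h ⊢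
  exact (by decide : ∀ a b : ZMod 2, a + b = 1 → a = 1 ∨ b = 1) _ _ h

theorem exists_mul_eq_wordProd_eraseIdx {ω : List B} {t : W}
    (h : cs.IsRightInversion (cs.wordProd ω) t) :
    ∃ k < ω.length, cs.wordProd ω * t = cs.wordProd (ω.eraseIdx k) := by
  classical
  have t_mem : t ∈ cs.rightInvSeq ω := by
    by_contra hmem
    simp [isRightInversion_iff_inversionParity_eq_one, inversionParity_wordProd,
      List.count_eq_zero_of_not_mem hmem] at h
  obtain ⟨k, hk, rfl⟩ := List.getElem_of_mem t_mem
  refine ⟨k, by simpa using hk, ?_⟩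
  rw [← wordProd_mul_getD_rightInvSeq, List.getD_eq_getElem _ _ hk]

theorem exists_sublist_isReduced (ω : List B) :
    ∃ ω' : List B, ω'.Sublist ω ∧ cs.IsReduced ω' ∧ cs.wordProd ω' = cs.wordProd ω := by
  induction ω using List.reverseRecOn with
  | nil => exact ⟨[], .refl _, by simp [CoxeterSystem.IsReduced], rfl⟩
  | append_singleton ω i ih =>
    obtain ⟨ω', hsub, hred, hprod⟩ := ih
    simp only [wordProd_append, wordProd_singleton, ← hprod]
    by_cases hi : cs.IsRightDescent (cs.wordProd ω') i
    · obtain ⟨k, hk, herase⟩ := exists_mul_eq_wordProd_eraseIdx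
        ((cs.isRightInversion_simple_iff_isRightDescent _ i).2 hi)
      refine ⟨ω'.eraseIdx k, ?_, ?_, herase.symm⟩
      · exact (List.eraseIdx_sublist ..).trans (hsub.trans (List.sublist_append_left ..))
      · have hlen := cs.isRightDescent_iff.1 hi
        rw [herase, hred.eq] at hlen
        rw [CoxeterSystem.IsReduced, List.length_eraseIdx_of_lt hk, ← hlen, Nat.add_sub_cancel]
    · refine ⟨ω' ++ [i], hsub.append (.refl _), ?_, by simp [wordProd_append]⟩
      rw [CoxeterSystem.IsReduced, wordProd_append, wordProd_singleton,
        cs.not_isRightDescent_iff.1 hi, hred.eq, List.length_append, List.length_singleton]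

end InversionParity

section SpecialSubgroup

/-- The special subgroup `W_I`, generated by the simple reflections indexed by `I`. -/
abbrev specialSubgroup (I : Set B) : Subgroup W := Subgroup.closure (cs.simple '' I)

variable {cs} {I J : Set B} {d t v w : W}

theorem simple_mem_specialSubgroup {i : B} (hi : i ∈ I) : cs.simple i ∈ specialSubgroup cs I :=
  Subgroup.subset_closure (Set.mem_image_of_mem _ hi)

theorem wordProd_mem_specialSubgroup {ω : List B} (hω : ∀ i ∈ ω, i ∈ I) :
    cs.wordProd ω ∈ specialSubgroup cs I := by
  refine list_prod_mem fun x hx ↦ ?_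
  obtain ⟨i, hi, rfl⟩ := List.mem_map.1 hx
  exact simple_mem_specialSubgroup (hω i hi)

theorem exists_wordProd_eq_of_mem_specialSubgroup (hw : w ∈ specialSubgroup cs I) :
    ∃ ω : List B, (∀ i ∈ ω, i ∈ I) ∧ cs.wordProd ω = w := by
  have concat {w : W} (hw : ∃ ω : List B, (∀ i ∈ ω, i ∈ I) ∧ cs.wordProd ω = w) {i : B}
      (hi : i ∈ I) : ∃ ω : List B, (∀ i ∈ ω, i ∈ I) ∧ cs.wordProd ω = w * cs.simple i := by
    obtain ⟨ω, hω, rfl⟩ := hw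
    exact ⟨ω ++ [i], by simpa [or_imp, forall_and] using ⟨hω, hi⟩, by simp [wordProd_append]⟩
  induction hw using Subgroup.closure_induction_right with
  | one => exact ⟨[], by simp, cs.wordProd_nil⟩
  | mul_right w _ s hs ih =>
    obtain ⟨i, hi, rfl⟩ := hs
    exact concat ih hi
  | mul_inv_cancel w _ s hs ih =>
    obtain ⟨i, hi, rfl⟩ := hs
    simpa only [inv_simple] using concat ih hi

theorem exists_isReduced_of_mem_specialSubgroup (hw : w ∈ specialSubgroup cs I) :
    ∃ ω : List B, (∀ i ∈ ω, i ∈ I) ∧ cs.IsReduced ω ∧ cs.wordProd ω = w := by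
  obtain ⟨ω, hω, rfl⟩ := exists_wordProd_eq_of_mem_specialSubgroup hw
  obtain ⟨ω', hsub, hred, hprod⟩ := exists_sublist_isReduced (cs := cs) ω
  exact ⟨ω', fun i hi ↦ hω i (hsub.subset hi), hred, hprod⟩

@[elab_as_elim]
theorem specialSubgroup_induction {p : (w : W) → w ∈ specialSubgroup cs I → Prop}
    (one : p 1 (one_mem _))
    (mul_simple : ∀ w (hw : w ∈ specialSubgroup cs I), ∀ i (hi : i ∈ I),
      ¬ cs.IsRightDescent w i → p w hw →
        p (w * cs.simple i) (mul_mem hw (simple_mem_specialSubgroup hi)))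
    (hw : w ∈ specialSubgroup cs I) : p w hw := by
  obtain ⟨ω, hω, hred, rfl⟩ := exists_isReduced_of_mem_specialSubgroup hw
  induction ω using List.reverseRecOn with
  | nil => simpa using one
  | append_singleton ω i ih =>
    simp only [List.forall_mem_append, List.forall_mem_singleton] at hω
    have hredω : cs.IsReduced ω := by simpa using hred.take ω.length
    have hasc : ¬ cs.IsRightDescent (cs.wordProd ω) i := by
      rw [not_isRightDescent_iff, hredω.eq, ← wordProd_singleton, ← wordProd_append, hred.eq,
        List.length_append, List.length_singleton]
    have hmem := wordProd_mem_specialSubgroup (cs := cs) hω.1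
    simpa [wordProd_append] using mul_simple _ hmem i hω.2 hasc (ih hω.1 hredω hmem)

theorem mem_specialSubgroup_of_isRightInversion (hw : w ∈ specialSubgroup cs I)
    (ht : cs.IsRightInversion w t) : t ∈ specialSubgroup cs I := by
  induction hw using specialSubgroup_induction generalizing t with
  | one => simp [IsRightInversion] at ht
  | mul_simple w _ i hi _ ih =>
    have hsi : cs.simple i ∈ specialSubgroup cs I := simple_mem_specialSubgroup hi
    rcases isRightInversion_or_of_mul ht with ⟨-, hlt⟩ | hconj
    · have t_eq : cs.simple i * t = 1 := by simpa using hlt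
      exact (eq_inv_of_mul_eq_one_right t_eq) ▸ inv_mem hsi
    · rw [← Subgroup.mul_mem_cancel_left _ hsi, ← Subgroup.mul_mem_cancel_right _ (inv_mem hsi)]
      exact ih hconj

theorem mem_image_simple_of_length_eq_one (hw : w ∈ specialSubgroup cs I)
    (hlen : cs.length w = 1) : w ∈ cs.simple '' I := by
  induction hw using specialSubgroup_induction with
  | one => simp at hlen
  | mul_simple w _ i hi hasc _ =>
    rw [not_isRightDescent_iff] at hasc
    have hw : w = 1 := cs.length_eq_zero_iff.1 (by omega)
    exact ⟨i, hi, by rw [hw, one_mul]⟩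

end SpecialSubgroup

section Kilmoyer

/-- `d` has minimal length in the coset `d W_J`. Minimality of `d` in `W_I d` is expressed as
`IsMinLeftCosetRep cs I d⁻¹`. -/
def IsMinLeftCosetRep (J : Set B) (d : W) : Prop :=
  ∀ v ∈ specialSubgroup cs J, cs.length d ≤ cs.length (d * v)

variable {cs} {I J : Set B} {d t v w : W}

theorem IsMinLeftCosetRep.not_isRightInversion (hd : IsMinLeftCosetRep cs J d)
    (ht : t ∈ specialSubgroup cs J) : ¬ cs.IsRightInversion d t :=
  fun h ↦ (hd t ht).not_gt h.2

theorem IsMinLeftCosetRep.length_mul (hd : IsMinLeftCosetRep cs J d)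
    (hv : v ∈ specialSubgroup cs J) : cs.length (d * v) = cs.length d + cs.length v := by
  induction hv using specialSubgroup_induction with
  | one => simp
  | mul_simple v hv j hj hasc ih =>
    have hasc_mul : ¬ cs.IsRightDescent (d * v) j := by
      rw [← isRightInversion_simple_iff_isRightDescent] at hasc ⊢
      intro h
      refine (isRightInversion_or_of_mul h).elim hasc (hd.not_isRightInversion ?_)
      exact mul_mem (mul_mem hv (simple_mem_specialSubgroup hj)) (inv_mem hv)
    rw [not_isRightDescent_iff] at hasc hasc_mul
    rw [← mul_assoc, hasc_mul, hasc, ih, add_assoc]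

theorem exists_eq_mul_mul_isMinLeftCosetRep (cs : CoxeterSystem M W) (I J : Set B) (w : W) :
    ∃ a ∈ specialSubgroup cs I, ∃ b ∈ specialSubgroup cs J, ∃ d : W, w = a * d * b ∧
      IsMinLeftCosetRep cs I d⁻¹ ∧ IsMinLeftCosetRep cs J d := by
  obtain ⟨⟨⟨a, ha⟩, ⟨b, hb⟩⟩, -, hmin⟩ := exists_minimalFor_of_wellFoundedLT (fun _ ↦ True)
    (fun p : specialSubgroup cs I × specialSubgroup cs J ↦ cs.length (p.1 * w * p.2)) ⟨1, trivial⟩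
  replace hmin (x) (hx : x ∈ specialSubgroup cs I) (y) (hy : y ∈ specialSubgroup cs J) :
      cs.length (a * w * b) ≤ cs.length (x * w * y) :=
    (le_total _ _).elim id (hmin (j := (⟨x, hx⟩, ⟨y, hy⟩)) trivial)
  refine ⟨a⁻¹, inv_mem ha, b⁻¹, inv_mem hb, a * w * b, by group, fun u hu ↦ ?_, fun v hv ↦ ?_⟩
  · rw [← cs.length_inv (_ * u), cs.length_inv, mul_inv_rev, inv_inv, ← mul_assoc, ← mul_assoc]
    exact hmin _ (mul_mem (inv_mem hu) ha) b hb
  · rw [mul_assoc _ b v]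
    exact hmin a ha _ (mul_mem hb hv)

theorem IsMinLeftCosetRep.simple_mem_conj_smul (hd : IsMinLeftCosetRep cs J d) {i : B}
    (hi : d⁻¹ * cs.simple i * d ∈ specialSubgroup cs J) :
    cs.simple i ∈ MulAut.conj d • (cs.simple '' J) := by
  rw [Set.mem_smul_set_iff_inv_smul_mem, ← map_inv, MulAut.smul_def, MulAut.conj_apply, inv_inv]
  refine mem_image_simple_of_length_eq_one hi (le_antisymm ?_ ?_)
  · have length_add := hd.length_mul hi
    rw [← mul_assoc, mul_inv_cancel_left] at length_add
    have length_le := cs.length_mul_le (cs.simple i) d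
    rw [length_simple] at length_le
    omega
  · rw [Nat.one_le_iff_ne_zero, Ne, length_eq_zero_iff, mul_assoc, inv_mul_eq_one, eq_comm,
      mul_eq_right, ← length_eq_zero_iff, length_simple]
    exact one_ne_zero

theorem IsMinLeftCosetRep.inv_mul_simple_mul_mem (hd : IsMinLeftCosetRep cs I d⁻¹)
    (hw : w ∈ specialSubgroup cs I) {i : B} (hi : i ∈ I) (hasc : ¬ cs.IsRightDescent w i)
    (hwi : w * cs.simple i ∈ MulAut.conj d • specialSubgroup cs J) :
    d⁻¹ * cs.simple i * d ∈ specialSubgroup cs J := by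
  obtain ⟨v, hv, hvw⟩ := hwi
  have hsi : cs.simple i ∈ specialSubgroup cs I := simple_mem_specialSubgroup hi
  have mul_inv_eq : v * d⁻¹ = d⁻¹ * (w * cs.simple i) := by
    rw [← hvw]
    simp [mul_assoc]
  have descent : cs.IsRightInversion (v * d⁻¹) (cs.simple i) := by
    rw [isRightInversion_simple_iff_isRightDescent, isRightDescent_iff, mul_inv_eq,
      hd.length_mul (mul_mem hw hsi), mul_assoc, simple_mul_simple_cancel_right, hd.length_mul hw,
      cs.not_isRightDescent_iff.1 hasc, add_assoc]
  have inversion := (isRightInversion_or_of_mul descent).resolve_left (hd.not_isRightInversion hsi)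
  simpa using mem_specialSubgroup_of_isRightInversion hv inversion

theorem specialSubgroup_inf_conj_smul (hI : IsMinLeftCosetRep cs I d⁻¹)
    (hJ : IsMinLeftCosetRep cs J d) :
    specialSubgroup cs I ⊓ MulAut.conj d • specialSubgroup cs J =
      Subgroup.closure (cs.simple '' I ∩ MulAut.conj d • (cs.simple '' J)) := by
  refine le_antisymm ?_ (le_inf (Subgroup.closure_mono Set.inter_subset_left) ?_)
  · rintro u ⟨huI, huJ⟩
    induction huI using specialSubgroup_induction with
    | one => exact one_mem _
    | mul_simple u hu i hi hasc ih =>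
      have simple_mem := hJ.simple_mem_conj_smul (hI.inv_mul_simple_mul_mem hu hi hasc huJ)
      have simple_mem_conj : cs.simple i ∈ MulAut.conj d • specialSubgroup cs J :=
        Set.smul_set_mono Subgroup.subset_closure simple_mem
      refine mul_mem (ih ?_) (Subgroup.subset_closure ⟨Set.mem_image_of_mem _ hi, simple_mem⟩)
      exact (Subgroup.mul_mem_cancel_right _ simple_mem_conj).1 huJ
  · rw [Subgroup.smul_closure]
    exact Subgroup.closure_mono Set.inter_subset_right

end Kilmoyer

end CoxeterParabolic

open CoxeterParabolic
open scoped Pointwise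

theorem inter_special_parabolic_rank_lt_general
    {B W : Type*} [Group W] {M : CoxeterMatrix B} (cs : CoxeterSystem M W) (I J : Set B)
    (hIJ : I.Finite ∨ J.Finite) (w : W)
    (h₁ : ¬ specialSubgroup cs I ≤ MulAut.conj w • specialSubgroup cs J)
    (h₂ : ¬ MulAut.conj w • specialSubgroup cs J ≤ specialSubgroup cs I) :
    ∃ (x : W) (K : Set B),
      specialSubgroup cs I ⊓ MulAut.conj w • specialSubgroup cs J =
        MulAut.conj x • specialSubgroup cs K ∧
      K.encard < min I.encard J.encard := by
  obtain ⟨a, ha, b, hb, d, rfl, hdI, hdJ⟩ := exists_eq_mul_mul_isMinLeftCosetRep cs I J w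
  have conj_J : MulAut.conj (a * d * b) • specialSubgroup cs J =
      MulAut.conj a • MulAut.conj d • specialSubgroup cs J := by
    rw [map_mul, map_mul, mul_smul, mul_smul, Subgroup.conj_smul_eq_self_of_mem hb]
  rw [conj_J] at h₁ h₂ ⊢
  rw [← Subgroup.conj_smul_eq_self_of_mem ha, Subgroup.pointwise_smul_le_pointwise_smul_iff,
    Subgroup.smul_closure] at h₁ h₂
  rw [← Subgroup.conj_smul_eq_self_of_mem ha, ← Subgroup.smul_inf,
    specialSubgroup_inf_conj_smul hdI hdJ]
  have ssubset_I := Set.inter_ssubset_left_iff.2 (mt (Subgroup.closure_mono ·) h₁)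
  have ssubset_J := Set.inter_ssubset_right_iff.2 (mt (Subgroup.closure_mono ·) h₂)
  have finite : (cs.simple '' I ∩ MulAut.conj d • (cs.simple '' J)).Finite :=
    hIJ.elim (fun hI ↦ (hI.image _).inter_of_left _)
      (fun hJ ↦ (hJ.image _).smul_set.inter_of_right _)
  -- A transversal `K` instead of the preimage avoids a proof that `cs.simple` is injective.
  obtain ⟨K, -, hK⟩ := Set.SurjOn.exists_bijOn_subset ssubset_I.subset
  refine ⟨a, K, by rw [specialSubgroup, hK.image_eq], ?_⟩
  rw [← hK.injOn.encard_image, hK.image_eq]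
  refine lt_min ((finite.encard_lt_encard ssubset_I).trans_le (Set.encard_image_le ..)) ?_
  refine (finite.encard_lt_encard ssubset_J).trans_le ?_
  exact (Set.encard_smul_set ..).trans_le (Set.encard_image_le ..)

/-- **Lemma 3.** If neither of `W_I` and `w W_J w⁻¹` contains the other, then their
intersection is a parabolic subgroup `x W_K x⁻¹` with `|K| < min {|I|, |J|}`. -/
theorem inter_special_parabolic_rank_lt
    {B : Type*} [Finite B] {W : Type*} [Group W] {M : CoxeterMatrix B}
    (cs : CoxeterSystem M W) (I J : Set B) (w : W)
    (h₁ : ¬ Subgroup.closure (cs.simple '' I) ≤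
      (Subgroup.closure (cs.simple '' J)).map (MulAut.conj w).toMonoidHom)
    (h₂ : ¬ (Subgroup.closure (cs.simple '' J)).map (MulAut.conj w).toMonoidHom ≤
      Subgroup.closure (cs.simple '' I)) :
    ∃ (x : W) (K : Set B),
      Subgroup.closure (cs.simple '' I) ⊓
          (Subgroup.closure (cs.simple '' J)).map (MulAut.conj w).toMonoidHom =
        (Subgroup.closure (cs.simple '' K)).map (MulAut.conj x).toMonoidHom ∧
      K.ncard < min I.ncard J.ncard := by
  obtain ⟨x, K, hK, hlt⟩ :=
    inter_special_parabolic_rank_lt_general cs I J (.inl I.toFinite) w h₁ h₂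
  refine ⟨x, K, hK, ?_⟩
  simpa only [← (Set.toFinite _).cast_ncard_eq, lt_min_iff, Nat.cast_lt] using hlt
end

section
/- Let (W, S) be a Coxeter system of finite rank and let A be a subset of W. Then the parabolic closure Pc(A), defined as the intersection of all parabolic subgroups of W containing A, is itself a parabolic subgroup of W; that is, there exist w ∈ W and J ⊆ S with Pc(A) = w W_J w⁻¹. -/
/-!
Let `N(w)` be the set of left inversions of `w`, that is, of the reflections `t` with
`ℓ (t w) < ℓ w`. Letting `W` act on `W × ZMod 2` so that `s i` conjugates the first coordinate and
flips the second one exactly at `s i`, one sees that the parity of the number of occurrences of `t`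
in the left inversion sequence of a word depends only on the product of the word. Hence every left
inversion of a product of simple reflections occurs in the left inversion sequence of the word (the
strong exchange property). Two consequences are `N(u v) ⊆ N(u) ∪ u N(v) u⁻¹`, and `N(w) ⊆ W_I`
for `w ∈ W_I`.

Let `d` be of minimal length in `W_I d`, so that `N(d)` is disjoint from `W_I`. Then
`W_I ∩ d W_J d⁻¹` is generated by the simple reflections `s i`, `i ∈ I`, that it contains: if
`w ≠ 1` is an element of it and `s i ∈ N(w)` with `i ∈ I`, then `w d = d v` with `v ∈ W_J`, and
`s i ∈ N(w d) = N(d v)` is not in `N(d)`, so `s i ∈ d N(v) d⁻¹ ⊆ d W_J d⁻¹`, and `s i * w` is a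
shorter element of the intersection.

After conjugation, this describes the intersection of `x W_I x⁻¹` with any other parabolic
subgroup as `x a W_K a⁻¹ x⁻¹` with `a ∈ W_I` and `K ⊆ I`. So a parabolic subgroup containing `A`
whose type is finite and minimal is contained in all the others.
-/

namespace CoxeterParabolic

open CoxeterSystem
open scoped Pointwise

variable {B W : Type*} [Group W] {M : CoxeterMatrix B} (cs : CoxeterSystem M W)

section StrongExchange

theorem prod_map_alternatingWord {G : Type*} [Monoid G] (f : B → G) (i j : B) (n : ℕ) :
    ((alternatingWord i j (2 * n)).map f).prod = (f i * f j) ^ n := by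
  induction n with
  | zero => simp [alternatingWord]
  | succ n ih =>
    rw [mul_add_one, alternatingWord_succ, alternatingWord_succ, pow_succ, ← ih]
    simp

theorem leftInvSeq_alternatingWord (i j : B) (n : ℕ) :
    cs.leftInvSeq (alternatingWord i j (2 * n)) =
      (List.range (2 * n)).map fun k => cs.simple i * (cs.simple j * cs.simple i) ^ k := by
  refine List.ext_getElem (by simp) fun k hk _ => ?_
  have hk' : k < 2 * n := by simpa using hk
  rw [cs.getElem_leftInvSeq_alternatingWord i j n k hk', cs.prod_alternatingWord_eq_mul_pow]
  simp [Nat.mul_add_div]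

theorem leftInvSeq_append (ω ω' : List B) :
    cs.leftInvSeq (ω ++ ω') =
      cs.leftInvSeq ω ++ (cs.leftInvSeq ω').map (MulAut.conj (cs.wordProd ω)) := by
  induction ω with
  | nil => simp
  | cons i ω ih => simp [leftInvSeq, ih, wordProd_cons]

open Classical in
theorem even_count_leftInvSeq_alternatingWord (i j : B) (t : W) :
    Even ((cs.leftInvSeq (alternatingWord i j (2 * M i j))).count t) := by
  -- The sequence is periodic with period `M i j`, hence a list repeated twice.
  have hperiod (k : ℕ) :
      (cs.simple j * cs.simple i) ^ (M i j + k) = (cs.simple j * cs.simple i) ^ k := by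
    rw [pow_add, M.symmetric, cs.simple_mul_simple_pow, one_mul]
  rw [leftInvSeq_alternatingWord, two_mul, List.range_add, List.map_append, List.map_map,
    List.count_append]
  simp only [Function.comp_def, hperiod]
  exact Even.add_self _

open Classical in
/-- The action of the simple reflection `s i` on `W × ZMod 2`: conjugation on the first coordinate,
together with a flip of the second one at `s i`. Restricted to reflections, this is the action on
signed reflections, that is, on roots. -/
noncomputable def simpleSignedConj (i : B) : Function.End (W × ZMod 2) :=
  fun p => (MulAut.conj (cs.simple i) p.1, p.2 + if p.1 = cs.simple i then 1 else 0)

open Classical in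
theorem prod_map_simpleSignedConj (ω : List B) (t : W) (ε : ZMod 2) :
    (ω.map (simpleSignedConj cs)).prod (t, ε) =
      (MulAut.conj (cs.wordProd ω) t,
        ε + (cs.leftInvSeq ω).count (MulAut.conj (cs.wordProd ω) t)) := by
  induction ω with
  | nil => simp [Function.End.one_def]
  | cons i ω ih =>
    set u := MulAut.conj (cs.wordProd ω) t
    have hu : MulAut.conj (cs.wordProd (i :: ω)) t = MulAut.conj (cs.simple i) u := by
      simp [u, wordProd_cons]
    have hflip : cs.simple i = MulAut.conj (cs.simple i) u ↔ u = cs.simple i := by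
      rw [eq_comm, MulAut.conj_apply, mul_inv_eq_iff_eq_mul, mul_right_inj]
    rw [List.map_cons, List.prod_cons]
    change simpleSignedConj cs i ((ω.map (simpleSignedConj cs)).prod (t, ε)) = _
    rw [ih, hu, leftInvSeq, List.count_cons,
      List.count_map_of_injective _ _ (MulAut.conj (cs.simple i)).injective]
    simp only [simpleSignedConj, beq_iff_eq, hflip]
    push_cast
    rw [add_assoc]

theorem isLiftable_simpleSignedConj : M.IsLiftable (simpleSignedConj cs) := by
  classical
  intro i j
  funext ⟨t, ε⟩
  have hprod : cs.wordProd (alternatingWord i j (2 * M i j)) = 1 := by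
    rw [wordProd, prod_map_alternatingWord, cs.simple_mul_simple_pow]
  rw [← prod_map_alternatingWord, prod_map_simpleSignedConj, hprod,
    (ZMod.natCast_eq_zero_iff_even).2 (even_count_leftInvSeq_alternatingWord cs i j _)]
  simp [Function.End.one_def]

/-- The action of `W` on `W × ZMod 2` extending `simpleSignedConj`. Its second coordinate records
the parity of the number of occurrences of a reflection in a left inversion sequence. -/
noncomputable def signedConj : W →* Function.End (W × ZMod 2) :=
  cs.lift ⟨simpleSignedConj cs, isLiftable_simpleSignedConj cs⟩

open Classical in
theorem signedConj_wordProd (ω : List B) (t : W) (ε : ZMod 2) :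
    signedConj cs (cs.wordProd ω) (t, ε) =
      (MulAut.conj (cs.wordProd ω) t,
        ε + (cs.leftInvSeq ω).count (MulAut.conj (cs.wordProd ω) t)) := by
  have hsimple : signedConj cs ∘ cs.simple = simpleSignedConj cs :=
    funext fun i => cs.lift_apply_simple _ i
  rw [← prod_map_simpleSignedConj, wordProd, map_list_prod, List.map_map, hsimple]

theorem signedConj_mul_apply (u v : W) (p : W × ZMod 2) :
    signedConj cs (u * v) p = signedConj cs u (signedConj cs v p) :=
  congrFun (map_mul (signedConj cs) u v) p

theorem signedConj_add (w t : W) (ε ε' : ZMod 2) :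
    signedConj cs w (t, ε + ε') =
      ((signedConj cs w (t, ε)).1, (signedConj cs w (t, ε)).2 + ε') := by
  classical
  obtain ⟨ω, rfl⟩ := cs.wordProd_surjective w
  simp only [signedConj_wordProd, add_right_comm]

theorem signedConj_fst (w : W) (p : W × ZMod 2) :
    (signedConj cs w p).1 = MulAut.conj w p.1 := by
  classical
  obtain ⟨ω, rfl⟩ := cs.wordProd_surjective w
  rw [signedConj_wordProd]

theorem signedConj_simple_self (i : B) (ε : ZMod 2) :
    signedConj cs (cs.simple i) (cs.simple i, ε) = (cs.simple i, ε + 1) := by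
  simp [signedConj, simpleSignedConj]

theorem signedConj_self {t : W} (ht : cs.IsReflection t) (ε : ZMod 2) :
    signedConj cs t (t, ε) = (t, ε + 1) := by
  obtain ⟨w, i, rfl⟩ := ht
  set t := w * cs.simple i * w⁻¹ with ht
  obtain ⟨ε', hε'⟩ : ∃ ε', signedConj cs w⁻¹ (t, ε) = (cs.simple i, ε') :=
    ⟨_, Prod.ext (by rw [signedConj_fst]; simp [ht, mul_assoc]) rfl⟩
  have hback : signedConj cs w (cs.simple i, ε') = (t, ε) := by
    rw [← hε', ← signedConj_mul_apply, mul_inv_cancel, map_one, Function.End.one_def, id]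
  calc signedConj cs t (t, ε)
      = signedConj cs w (signedConj cs (cs.simple i) (signedConj cs w⁻¹ (t, ε))) := by
        rw [← signedConj_mul_apply, ← signedConj_mul_apply]
    _ = (t, ε + 1) := by rw [hε', signedConj_simple_self, signedConj_add, hback]

theorem mem_leftInvSeq_of_isLeftInversion {ω : List B} {t : W}
    (ht : cs.IsLeftInversion (cs.wordProd ω) t) : t ∈ cs.leftInvSeq ω := by
  classical
  by_contra hω
  obtain ⟨ρ, hρ, hρt⟩ := cs.exists_isReduced (t * cs.wordProd ω)
  have hρω : cs.wordProd ω = t * cs.wordProd ρ := by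
    rw [← hρt, ← mul_assoc, ht.1.mul_self, one_mul]
  set u := (cs.wordProd ω)⁻¹ * t * cs.wordProd ω with hu
  have hωu : MulAut.conj (cs.wordProd ω) u = t := by simp [hu, mul_assoc]
  have hρu : MulAut.conj (cs.wordProd ρ) u = t := by
    rw [← hρt, map_mul MulAut.conj, MulAut.mul_apply, hωu, MulAut.conj_apply, mul_inv_cancel_right]
  have hparity : ((cs.leftInvSeq ω).count t : ZMod 2) = (cs.leftInvSeq ρ).count t + 1 := by
    have h := congrArg Prod.snd (signedConj_wordProd cs ω u 0)
    rw [hωu, hρω, signedConj_mul_apply, signedConj_wordProd, hρu, signedConj_self cs ht.1,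
      zero_add, zero_add] at h
    exact h.symm
  have hmem : t ∈ cs.leftInvSeq ρ := by
    by_contra hn
    simp [List.count_eq_zero.2 hω, List.count_eq_zero.2 hn] at hparity
  refine (cs.isLeftInversion_of_mem_leftInvSeq hρ hmem).2.not_gt ?_
  rw [← hρω, ← hρt]
  exact ht.2

theorem exists_eraseIdx_of_isLeftInversion {ω : List B} {t : W}
    (ht : cs.IsLeftInversion (cs.wordProd ω) t) :
    ∃ j < ω.length, t * cs.wordProd ω = cs.wordProd (ω.eraseIdx j) := by
  obtain ⟨j, hj, rfl⟩ := List.mem_iff_getElem.1 (mem_leftInvSeq_of_isLeftInversion cs ht)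
  refine ⟨j, by simpa using hj, ?_⟩
  rw [← cs.getD_leftInvSeq_mul_wordProd, List.getD_eq_getElem _ _ hj]

theorem isLeftInversion_or_of_isLeftInversion_mul {u v t : W}
    (ht : cs.IsLeftInversion (u * v) t) :
    cs.IsLeftInversion u t ∨ cs.IsLeftInversion v (u⁻¹ * t * u) := by
  obtain ⟨ω, hω, rfl⟩ := cs.exists_isReduced u
  obtain ⟨ω', hω', rfl⟩ := cs.exists_isReduced v
  rw [← wordProd_append] at ht
  have hmem := mem_leftInvSeq_of_isLeftInversion cs ht
  rw [leftInvSeq_append, List.mem_append, List.mem_map] at hmem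
  rcases hmem with hmem | ⟨r, hr, rfl⟩
  · exact .inl (cs.isLeftInversion_of_mem_leftInvSeq hω hmem)
  · right
    simpa [mul_assoc] using cs.isLeftInversion_of_mem_leftInvSeq hω' hr

end StrongExchange

section Special

/-- The special subgroup `W_I`, generated by the simple reflections `s i` with `i ∈ I`. -/
def special (I : Set B) : Subgroup W := Subgroup.closure (cs.simple '' I)

variable {cs} {I J : Set B} {d w t : W} {i : B}

theorem simple_mem_special (hi : i ∈ I) : cs.simple i ∈ special cs I :=
  Subgroup.subset_closure ⟨i, hi, rfl⟩

theorem special_le_iff {H : Subgroup W} : special cs I ≤ H ↔ ∀ i ∈ I, cs.simple i ∈ H := by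
  simp [special, Subgroup.closure_le, Set.subset_def]

theorem mem_special_iff :
    w ∈ special cs I ↔ ∃ ω : List B, (∀ i ∈ ω, i ∈ I) ∧ cs.wordProd ω = w := by
  constructor
  · intro hw
    induction hw using Subgroup.closure_induction with
    | mem _ hx => obtain ⟨i, hi, rfl⟩ := hx; exact ⟨[i], by simpa using hi, by simp⟩
    | one => exact ⟨[], by simp, by simp⟩
    | mul _ _ _ _ hx hy =>
      obtain ⟨ω, hω, rfl⟩ := hx
      obtain ⟨ω', hω', rfl⟩ := hy
      exact ⟨ω ++ ω', by grind, cs.wordProd_append ω ω'⟩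
    | inv _ _ hx =>
      obtain ⟨ω, hω, rfl⟩ := hx
      exact ⟨ω.reverse, by simpa using hω, cs.wordProd_reverse ω⟩
  · rintro ⟨ω, hω, rfl⟩
    exact list_prod_mem (by simpa using fun i hi => simple_mem_special (hω i hi))

theorem mem_special_of_isLeftInversion (hw : w ∈ special cs I) (ht : cs.IsLeftInversion w t) :
    t ∈ special cs I := by
  obtain ⟨ω, hω, rfl⟩ := mem_special_iff.1 hw
  obtain ⟨j, -, hj⟩ := exists_eraseIdx_of_isLeftInversion cs ht
  rw [← Subgroup.mul_mem_cancel_right _ hw, hj]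
  exact mem_special_iff.2 ⟨_, fun k hk => hω k (List.mem_of_mem_eraseIdx hk), rfl⟩

theorem exists_isLeftDescent_of_mem_special (hw : w ∈ special cs I) (hw1 : w ≠ 1) :
    ∃ i ∈ I, cs.IsLeftDescent w i := by
  obtain ⟨ω, hω, rfl⟩ := mem_special_iff.1 hw
  clear hw
  induction hn : ω.length using Nat.strong_induction_on generalizing ω with
  | _ n ih =>
  cases ω with
  | nil => simp at hw1
  | cons i ω =>
    by_cases hi : cs.IsLeftDescent (cs.wordProd (i :: ω)) i
    · exact ⟨i, hω i (by simp), hi⟩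
    -- Otherwise `s i` cancels a letter of `ω`, which leaves a shorter word in `I`.
    rw [wordProd_cons, ← cs.isLeftDescent_iff_not_isLeftDescent_mul] at hi
    obtain ⟨j, hj, hcancel⟩ := exists_eraseIdx_of_isLeftInversion cs
      ((cs.isLeftInversion_simple_iff_isLeftDescent _ i).2 hi)
    rw [wordProd_cons, hcancel] at hw1 ⊢
    refine ih _ ?_ _ (fun k hk => hω k ?_) hw1 rfl
    · grind
    · exact List.mem_cons_of_mem _ (List.mem_of_mem_eraseIdx hk)

/-- `d` has minimal length in the coset `W_I d`; such elements serve as coset representatives whose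
left inversions all lie outside `W_I`. -/
def IsCosetMinimal (cs : CoxeterSystem M W) (I : Set B) (d : W) : Prop :=
  ∀ a ∈ special cs I, cs.length d ≤ cs.length (a * d)

variable (cs) in
theorem exists_isCosetMinimal_mul (I : Set B) (w : W) :
    ∃ a ∈ special cs I, IsCosetMinimal cs I (a * w) := by
  obtain ⟨a, ha, hmin⟩ := WellFounded.has_min (measure fun a : W => cs.length (a * w)).wf
    (special cs I : Set W) ⟨1, one_mem _⟩
  refine ⟨a, ha, fun b hb => not_lt.1 ?_⟩
  rw [← mul_assoc]
  exact hmin (b * a) (mul_mem hb ha)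

theorem IsCosetMinimal.not_isLeftInversion (hd : IsCosetMinimal cs I d) (ht : t ∈ special cs I) :
    ¬ cs.IsLeftInversion d t :=
  fun h => (hd t ht).not_gt h.2

theorem IsCosetMinimal.isLeftInversion_mul (hd : IsCosetMinimal cs I d) (hw : w ∈ special cs I)
    (ht : cs.IsLeftInversion w t) : cs.IsLeftInversion (w * d) t := by
  have htI := mem_special_of_isLeftInversion hw ht
  have htw := mul_mem htI hw
  by_contra h
  rw [← ht.1.isLeftInversion_mul_right_iff, ← mul_assoc] at h
  rcases isLeftInversion_or_of_isLeftInversion_mul cs h with h | h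
  · exact ht.1.isLeftInversion_mul_right_iff.1 h ht
  · exact hd.not_isLeftInversion (mul_mem (mul_mem (inv_mem htw) htI) htw) h

theorem mem_conj_smul_iff {H : Subgroup W} : w ∈ MulAut.conj d • H ↔ d⁻¹ * w * d ∈ H := by
  simp [Subgroup.mem_pointwise_smul_iff_inv_smul_mem, MulAut.inv_def]

theorem IsCosetMinimal.simple_mem_conj_special (hd : IsCosetMinimal cs I d)
    (hwI : w ∈ special cs I) (hwJ : w ∈ MulAut.conj d • special cs J) (hi : i ∈ I)
    (hdesc : cs.IsLeftDescent w i) : cs.simple i ∈ MulAut.conj d • special cs J := by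
  rw [mem_conj_smul_iff] at hwJ ⊢
  have hinv : cs.IsLeftInversion (d * (d⁻¹ * w * d)) (cs.simple i) := by
    have h := hd.isLeftInversion_mul hwI ((cs.isLeftInversion_simple_iff_isLeftDescent w i).2 hdesc)
    simpa [mul_assoc] using h
  exact mem_special_of_isLeftInversion hwJ <|
    (isLeftInversion_or_of_isLeftInversion_mul cs hinv).resolve_left <|
      hd.not_isLeftInversion (simple_mem_special hi)

theorem IsCosetMinimal.special_inf_conj_special (hd : IsCosetMinimal cs I d) (J : Set B) :
    special cs I ⊓ MulAut.conj d • special cs J =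
      special cs {i ∈ I | cs.simple i ∈ MulAut.conj d • special cs J} := by
  apply le_antisymm
  · rintro w ⟨hwI, hwJ⟩
    induction hn : cs.length w using Nat.strong_induction_on generalizing w with
    | _ n ih =>
    by_cases hw1 : w = 1
    · exact hw1 ▸ one_mem _
    obtain ⟨i, hi, hdesc⟩ := exists_isLeftDescent_of_mem_special hwI hw1
    have hiJ := hd.simple_mem_conj_special hwI hwJ hi hdesc
    rw [← cs.simple_mul_simple_cancel_left (w := w) i]
    exact mul_mem (simple_mem_special ⟨hi, hiJ⟩) <|
      ih _ (hn ▸ hdesc) (mul_mem (simple_mem_special hi) hwI) (mul_mem hiJ hwJ) rfl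
  · exact special_le_iff.2 fun i hi => ⟨simple_mem_special hi.1, hi.2⟩

variable (cs) in
theorem exists_conj_special_inf_conj_special (x y : W) (I J : Set B) :
    ∃ a ∈ special cs I, ∃ K ⊆ I,
      MulAut.conj x • special cs I ⊓ MulAut.conj y • special cs J =
        MulAut.conj (x * a) • special cs K := by
  obtain ⟨b, hb, hmin⟩ := exists_isCosetMinimal_mul cs I (x⁻¹ * y)
  refine ⟨b⁻¹, inv_mem hb,
    {i ∈ I | cs.simple i ∈ MulAut.conj (b * (x⁻¹ * y)) • special cs J}, Set.sep_subset I _, ?_⟩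
  rw [← hmin.special_inf_conj_special J, Subgroup.smul_inf, smul_smul, ← map_mul,
    map_mul _ x b⁻¹, mul_smul, Subgroup.conj_smul_eq_self_of_mem (inv_mem hb)]
  congr 3
  group

end Special

/-- Parabolic subgroups are the conjugates `x W_I x⁻¹` of special subgroups, written with the
pointwise action of `MulAut W` on subgroups. -/
def IsParabolic (G : Subgroup W) : Prop :=
  ∃ (x : W) (I : Set B), G = MulAut.conj x • special cs I

/-- The parabolic closure `Pc(A)`, the intersection of the parabolic subgroups containing `A`. -/
def parabolicClosure (A : Set W) : Subgroup W :=
  sInf {G | IsParabolic cs G ∧ A ⊆ (G : Set W)}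

end CoxeterParabolic

open CoxeterParabolic
open scoped Pointwise

theorem parabolic_closure_is_parabolic_general {B W : Type*} [Group W] {M : CoxeterMatrix B}
    (cs : CoxeterSystem M W) (A : Set W)
    (hA : ∃ (x : W) (I : Finset B), A ⊆ (MulAut.conj x • special cs I : Subgroup W)) :
    IsParabolic cs (parabolicClosure cs A) := by
  obtain ⟨x₀, I₀, hA⟩ := hA
  obtain ⟨I, ⟨x, hx⟩, hmin⟩ := WellFounded.has_min wellFounded_lt
    {I : Finset B | ∃ x : W, A ⊆ (MulAut.conj x • special cs I : Subgroup W)} ⟨I₀, x₀, hA⟩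
  refine ⟨x, I, le_antisymm (sInf_le ⟨⟨x, I, rfl⟩, hx⟩) (le_sInf ?_)⟩
  rintro _ ⟨⟨y, J, rfl⟩, hy⟩
  obtain ⟨a, ha, K, hKI, hinf⟩ := exists_conj_special_inf_conj_special cs x y I J
  have hK : A ⊆ (MulAut.conj (x * a) • special cs K : Subgroup W) :=
    hinf ▸ Set.subset_inter hx hy
  lift K to Finset B using I.finite_toSet.subset hKI
  obtain rfl : K = I :=
    (Finset.coe_subset.1 hKI).eq_of_not_ssubset (hmin K ⟨x * a, hK⟩)
  rw [← inf_eq_left, hinf, map_mul, mul_smul, Subgroup.conj_smul_eq_self_of_mem ha]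

/-- **Main theorem.** In a finite-rank Coxeter system, the parabolic closure of a
subset `A ⊆ W` — the intersection of all parabolic subgroups containing `A` — is
itself a parabolic subgroup `w W_J w⁻¹`. -/
theorem parabolic_closure_is_parabolic
    {B : Type*} [Finite B] {W : Type*} [Group W] {M : CoxeterMatrix B}
    (cs : CoxeterSystem M W) (A : Set W) :
    ∃ (w : W) (J : Set B),
      sInf {G : Subgroup W |
          (∃ (x : W) (K : Set B),
            G = (Subgroup.closure (cs.simple '' K)).map (MulAut.conj x).toMonoidHom) ∧
          A ⊆ (G : Set W)} =
        (Subgroup.closure (cs.simple '' J)).map (MulAut.conj w).toMonoidHom := by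
  have := Fintype.ofFinite B
  refine parabolic_closure_is_parabolic_general cs A ⟨1, Finset.univ, ?_⟩
  simp [special, cs.subgroup_closure_range_simple]
end
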